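/- Let d_A, d_B ≥ 1 and let S be a self-adjoint operator on ℂ^{d_A} ⊗ ℂ^{d_B}. Then S is separable positive (a finite sum Σᵢ Aᵢ ⊗ Bᵢ of Kronecker products of positive semidefinite matrices) if and only if Re tr(S X) ≥ 0 for every self-adjoint X on ℂ^{d_A} ⊗ ℂ^{d_B} that is positive on pure tensors, i.e., satisfies ⟨ψ ⊗ φ, X(ψ ⊗ φ)⟩ ≥ 0 for all ψ ∈ ℂ^{d_A} and φ ∈ ℂ^{d_B}. Dually, a self-adjoint X is positive on pure tensors if and only if Re tr(X S) ≥ 0 for every separable positive S. -/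

import Mathlib

open Matrix Kronecker ComplexOrder

/-- Separable positivity: a finite sum of Kronecker products of
positive semidefinite matrices. -/
def SepPos {dA dB : ℕ} (S : Matrix (Fin dA × Fin dB) (Fin dA × Fin dB) ℂ) : Prop :=
  ∃ (n : ℕ) (A : Fin n → Matrix (Fin dA) (Fin dA) ℂ)
    (B : Fin n → Matrix (Fin dB) (Fin dB) ℂ),
    (∀ i, (A i).PosSemidef) ∧ (∀ i, (B i).PosSemidef) ∧ S = ∑ i, (A i) ⊗ₖ (B i)

/-- Positivity on pure tensors: `⟨ψ ⊗ φ, X (ψ ⊗ φ)⟩ ≥ 0` for all `ψ`, `φ`. -/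
def POPT {dA dB : ℕ} (X : Matrix (Fin dA × Fin dB) (Fin dA × Fin dB) ℂ) : Prop :=
  ∀ (ψ : Fin dA → ℂ) (φ : Fin dB → ℂ),
    0 ≤ star (fun p : Fin dA × Fin dB => ψ p.1 * φ p.2) ⬝ᵥ
      (X *ᵥ fun p : Fin dA × Fin dB => ψ p.1 * φ p.2)

theorem isCompact_convexHull_aux {E : Type*} [NormedAddCommGroup E] [NormedSpace ℝ E]
    [FiniteDimensional ℝ E] {s : Set E} (hs : IsCompact s) : IsCompact (convexHull ℝ s) := by
  classical
  have key : convexHull ℝ s = ⋃ m ∈ Set.Iic (Module.finrank ℝ E + 1),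
      (fun p : (Fin m → ℝ) × (Fin m → E) => ∑ i, p.1 i • p.2 i) ''
        (stdSimplex ℝ (Fin m) ×ˢ Set.univ.pi (fun _ => s)) := by
    apply Set.Subset.antisymm
    · intro x hx
      obtain ⟨ι, hι, z, w, hz, hai, hw, hw1, rfl⟩ := eq_pos_convex_span_of_mem_convexHull hx
      have hc : Fintype.card ι ≤ Module.finrank ℝ E + 1 :=
        hai.card_le_finrank_succ.trans (Nat.succ_le_succ (Submodule.finrank_le _))
      simp only [Set.mem_iUnion]
      let e := (Fintype.equivFin ι).symm
      refine ⟨Fintype.card ι, hc, (w ∘ e, z ∘ e), ⟨⟨fun i => (hw _).le, ?_⟩, ?_⟩, ?_⟩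
      · rw [← hw1]; exact e.sum_comp w
      · intro i _; exact hz ⟨_, rfl⟩
      · exact e.sum_comp (fun i => w i • z i)
    · intro x hx
      simp only [Set.mem_iUnion] at hx
      obtain ⟨m, -, p, ⟨hp1, hp2⟩, rfl⟩ := hx
      exact (convex_convexHull ℝ s).sum_mem (fun i _ => hp1.1 i) hp1.2
        (fun i _ => subset_convexHull ℝ s (hp2 i trivial))
  rw [key]
  refine (Set.finite_Iic _).isCompact_biUnion fun m _ => ?_
  refine IsCompact.image ((isCompact_stdSimplex ℝ (Fin m)).prod (isCompact_univ_pi fun _ => hs)) ?_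
  fun_prop

/-- separating hyperplane -/
theorem cone_sep_aux {E : Type*} [NormedAddCommGroup E] [NormedSpace ℝ E]
    [FiniteDimensional ℝ E] {s : Set E} (hs : IsCompact s) {x : E} (hx : x ∉ convexHull ℝ s) :
    ∃ (f : E →L[ℝ] ℝ) (u : ℝ), f x < u ∧ ∀ b ∈ s, u < f b := by
  obtain ⟨f, u, h1, h2⟩ := geometric_hahn_banach_point_closed (convex_convexHull ℝ s)
    (isCompact_convexHull_aux hs).isClosed hx
  exact ⟨f, u, h1, fun b hb => h2 b (subset_convexHull ℝ s hb)⟩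

attribute [local instance] Matrix.normedAddCommGroup Matrix.normedSpace

theorem functional_rep_aux {n : Type*} [Fintype n] [DecidableEq n]
    (f : Matrix n n ℂ →ₗ[ℝ] ℝ) :
    ∃ X : Matrix n n ℂ, X.IsHermitian ∧ ∀ M : Matrix n n ℂ, M.IsHermitian →
      f M = ((M * X).trace).re := by
  let X0 : Matrix n n ℂ := fun j i => ⟨f (Matrix.single i j 1), - f (Matrix.single i j Complex.I)⟩
  have h0 : ∀ M, f M = ((M * X0).trace).re := by
    intro M
    conv_lhs => rw [Matrix.matrix_eq_sum_single M]
    simp only [map_sum, Matrix.trace, Matrix.diag, Matrix.mul_apply, Complex.re_sum]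
    refine Finset.sum_congr rfl fun i _ => Finset.sum_congr rfl fun j _ => ?_
    have : Matrix.single i j (M i j) = (M i j).re • Matrix.single i j (1 : ℂ)
        + (M i j).im • Matrix.single i j Complex.I := by
      rw [Matrix.smul_single, Matrix.smul_single, ← Matrix.single_add]
      congr 1
      apply Complex.ext <;> simp
    rw [this, map_add, map_smul, map_smul]
    simp [X0]
  refine ⟨(1/2 : ℝ) • (X0 + X0ᴴ), ?_, fun M hM => ?_⟩
  · rw [Matrix.IsHermitian, Matrix.conjTranspose_smul, Matrix.conjTranspose_add,
      Matrix.conjTranspose_conjTranspose, add_comm]; simp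
  · have h1 : ((M * X0ᴴ).trace).re = ((M * X0).trace).re := by
      have : M * X0ᴴ = (X0 * M)ᴴ := by rw [Matrix.conjTranspose_mul, hM.eq]
      rw [this, Matrix.trace_conjTranspose, Matrix.trace_mul_comm]; simp
    rw [Matrix.mul_smul, Matrix.trace_smul, Matrix.mul_add, Matrix.trace_add, Complex.smul_re,
      Complex.add_re, h1, h0 M, smul_eq_mul]
    ring

/-- Pure tensor projector. -/
def pureP {dA dB : ℕ} (ψ : Fin dA → ℂ) (φ : Fin dB → ℂ) :
    Matrix (Fin dA × Fin dB) (Fin dA × Fin dB) ℂ :=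
  vecMulVec ψ (star ψ) ⊗ₖ vecMulVec φ (star φ)

theorem trace_mul_pureP {dA dB : ℕ} (X : Matrix (Fin dA × Fin dB) (Fin dA × Fin dB) ℂ)
    (ψ : Fin dA → ℂ) (φ : Fin dB → ℂ) :
    (X * pureP ψ φ).trace = star (fun p : Fin dA × Fin dB => ψ p.1 * φ p.2) ⬝ᵥ
      (X *ᵥ fun p : Fin dA × Fin dB => ψ p.1 * φ p.2) := by
  have : pureP ψ φ = vecMulVec (fun p : Fin dA × Fin dB => ψ p.1 * φ p.2)
      (star (fun p : Fin dA × Fin dB => ψ p.1 * φ p.2)) := by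
    ext ⟨i, j⟩ ⟨k, l⟩
    simp [pureP, vecMulVec_apply, kroneckerMap_apply]; ring
  rw [this, mul_vecMulVec, trace_vecMulVec, dotProduct_comm]

theorem popt_iff_aux {dA dB : ℕ} (X : Matrix (Fin dA × Fin dB) (Fin dA × Fin dB) ℂ)
    (hX : X.IsHermitian) :
    POPT X ↔ ∀ ψ φ, 0 ≤ ((X * pureP ψ φ).trace).re := by
  refine forall_congr' fun ψ => forall_congr' fun φ => ?_
  rw [trace_mul_pureP, Complex.le_def]
  have := hX.im_star_dotProduct_mulVec_self (fun p : Fin dA × Fin dB => ψ p.1 * φ p.2)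
  simp only [Complex.zero_re, Complex.zero_im]
  constructor
  · exact fun h => h.1
  · exact fun h => ⟨h, this.symm⟩

theorem sepPos_pureP {dA dB : ℕ} (ψ : Fin dA → ℂ) (φ : Fin dB → ℂ) : SepPos (pureP ψ φ) :=
  ⟨1, fun _ => _, fun _ => _, fun _ => posSemidef_vecMulVec_self_star ψ,
    fun _ => posSemidef_vecMulVec_self_star φ, by simp [pureP]⟩

theorem psd_sum_aux {d : ℕ} {A : Matrix (Fin d) (Fin d) ℂ} (hA : A.PosSemidef) :
    ∃ v : Fin d → Fin d → ℂ, A = ∑ k, vecMulVec (v k) (star (v k)) := by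
  obtain ⟨C, hC⟩ : ∃ C : Matrix (Fin d) (Fin d) ℂ, A = Cᴴ * C := by
    open scoped MatrixOrder in
    exact CStarAlgebra.nonneg_iff_eq_star_mul_self.mp hA.nonneg
  refine ⟨fun k => star (C k), ?_⟩
  ext i j
  simp [hC, mul_apply, Matrix.sum_apply, vecMulVec_apply]

theorem sepPos_pairing {dA dB : ℕ} {X S : Matrix (Fin dA × Fin dB) (Fin dA × Fin dB) ℂ}
    (hX : ∀ ψ φ, 0 ≤ ((X * pureP ψ φ).trace).re) (hS : SepPos S) :
    0 ≤ ((X * S).trace).re := by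
  obtain ⟨n, A, B, hA, hB, rfl⟩ := hS
  rw [Finset.mul_sum, trace_sum, Complex.re_sum]
  refine Finset.sum_nonneg fun i _ => ?_
  obtain ⟨v, hv⟩ := psd_sum_aux (hA i)
  obtain ⟨w, hw⟩ := psd_sum_aux (hB i)
  have : A i ⊗ₖ B i = ∑ k, ∑ l, pureP (v k) (w l) := by
    ext ⟨a, b⟩ ⟨c, d⟩
    rw [hv, hw]
    simp only [pureP, Matrix.sum_apply, kroneckerMap_apply, Finset.sum_mul_sum]
  rw [this]
  simp only [Finset.mul_sum, trace_sum, Complex.re_sum]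
  exact Finset.sum_nonneg fun k _ => Finset.sum_nonneg fun l _ => hX _ _

theorem SepPos.add_aux {dA dB : ℕ} {S T : Matrix (Fin dA × Fin dB) (Fin dA × Fin dB) ℂ}
    (hS : SepPos S) (hT : SepPos T) : SepPos (S + T) := by
  obtain ⟨n, A, B, hA, hB, rfl⟩ := hS
  obtain ⟨m, A', B', hA', hB', rfl⟩ := hT
  refine ⟨n + m, Fin.addCases A A', Fin.addCases B B', ?_, ?_, ?_⟩
  · intro i; refine Fin.addCases (fun i => ?_) (fun i => ?_) i <;> simp [hA, hA']
  · intro i; refine Fin.addCases (fun i => ?_) (fun i => ?_) i <;> simp [hB, hB']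
  · simp [Fin.sum_univ_add]

theorem SepPos.smul_aux {dA dB : ℕ} {S : Matrix (Fin dA × Fin dB) (Fin dA × Fin dB) ℂ}
    (hS : SepPos S) {t : ℝ} (ht : 0 ≤ t) : SepPos (t • S) := by
  obtain ⟨n, A, B, hA, hB, rfl⟩ := hS
  exact ⟨n, fun i => t • A i, B, fun i => (hA i).smul ht, hB, by
    simp [Finset.smul_sum, smul_kronecker]⟩

def pureK (dA dB : ℕ) : Set (Matrix (Fin dA × Fin dB) (Fin dA × Fin dB) ℂ) :=
  (fun p : EuclideanSpace ℂ (Fin dA) × EuclideanSpace ℂ (Fin dB) => pureP p.1.ofLp p.2.ofLp) ''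
    (Metric.sphere 0 1 ×ˢ Metric.sphere 0 1)

theorem isCompact_pureK (dA dB : ℕ) : IsCompact (pureK dA dB) := by
  refine ((isCompact_sphere _ _).prod (isCompact_sphere _ _)).image ?_
  refine continuous_pi fun i => continuous_pi fun j => ?_
  simp only [pureP, kroneckerMap_apply, vecMulVec_apply, Pi.star_apply]
  fun_prop

theorem pureK_pos {dA dB : ℕ} {X : Matrix (Fin dA × Fin dB) (Fin dA × Fin dB) ℂ}
    (h : ∀ k ∈ pureK dA dB, 0 ≤ ((X * k).trace).re) (ψ : Fin dA → ℂ) (φ : Fin dB → ℂ) :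
    0 ≤ ((X * pureP ψ φ).trace).re := by
  by_cases hψ : WithLp.toLp 2 ψ = 0
  · have : ψ = 0 := by simpa using hψ
    simp [this, pureP]
  by_cases hφ : WithLp.toLp 2 φ = 0
  · have : φ = 0 := by simpa using hφ
    simp [this, pureP]
  set a := ‖WithLp.toLp 2 ψ‖ with ha
  set b := ‖WithLp.toLp 2 φ‖ with hb
  have ha0 : a ≠ 0 := norm_ne_zero_iff.2 hψ
  have hb0 : b ≠ 0 := norm_ne_zero_iff.2 hφ
  have hk := h (pureP (a⁻¹ • ψ) (b⁻¹ • φ)) ⟨(a⁻¹ • WithLp.toLp 2 ψ, b⁻¹ • WithLp.toLp 2 φ), by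
    constructor
    · rw [mem_sphere_zero_iff_norm, norm_smul, norm_inv, Real.norm_of_nonneg (norm_nonneg _)]; exact inv_mul_cancel₀ ha0
    · rw [mem_sphere_zero_iff_norm, norm_smul, norm_inv, Real.norm_of_nonneg (norm_nonneg _)]; exact inv_mul_cancel₀ hb0, rfl⟩
  have : pureP ψ φ = (a^2 * b^2) • pureP (a⁻¹ • ψ) (b⁻¹ • φ) := by
    have ha' : (a : ℂ) ≠ 0 := by exact_mod_cast ha0
    have hb' : (b : ℂ) ≠ 0 := by exact_mod_cast hb0
    ext ⟨i, j⟩ ⟨k, l⟩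
    simp [pureP, kroneckerMap_apply, vecMulVec_apply]
    field_simp
  rw [this, Matrix.mul_smul, trace_smul, Complex.smul_re, smul_eq_mul]
  positivity

theorem trace_pureK {dA dB : ℕ} {k} (hk : k ∈ pureK dA dB) : k.trace = 1 := by
  obtain ⟨⟨ψ, φ⟩, ⟨h1, h2⟩, rfl⟩ := hk
  have aux : ∀ {d : ℕ} (v : EuclideanSpace ℂ (Fin d)), v ∈ Metric.sphere 0 1 →
      v.ofLp ⬝ᵥ star v.ofLp = 1 := by
    intro d v hv
    rw [← EuclideanSpace.inner_eq_star_dotProduct, inner_self_eq_norm_sq_to_K]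
    simp at hv
    simp [hv]
  simp only [pureP]
  rw [trace_kronecker, trace_vecMulVec, trace_vecMulVec, aux _ h1, aux _ h2, mul_one]

theorem pureP_herm {dA dB : ℕ} (ψ : Fin dA → ℂ) (φ : Fin dB → ℂ) : (pureP ψ φ).IsHermitian := by
  ext ⟨i, j⟩ ⟨k, l⟩
  simp [pureP, kroneckerMap_apply, vecMulVec_apply]; ring

theorem sepPos_of_dual {dA dB : ℕ} {S : Matrix (Fin dA × Fin dB) (Fin dA × Fin dB) ℂ}
    (hS : S.IsHermitian)
    (h : ∀ X : Matrix (Fin dA × Fin dB) (Fin dA × Fin dB) ℂ, X.IsHermitian →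
      (∀ k ∈ pureK dA dB, 0 ≤ ((X * k).trace).re) → 0 ≤ ((S * X).trace).re) : SepPos S := by
  have h1 : 0 ≤ S.trace.re := by
    simpa using h 1 isHermitian_one (fun k hk => by simp [trace_pureK hk])
  rcases h1.eq_or_lt with h0 | hpos
  · obtain ⟨c, hc⟩ := (isCompact_pureK dA dB).bddAbove_image
      (f := fun k => ((S * k).trace).re) (by fun_prop)
    have h2 := h (c • (1 : Matrix _ _ ℂ) - S)
      ((isHermitian_one.smul (IsSelfAdjoint.all c)).sub hS) (fun k hk => by
        have := hc ⟨k, hk, rfl⟩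
        simp only [sub_mul, smul_mul_assoc, one_mul, trace_sub, trace_smul, trace_pureK hk]
        simpa using this)
    have h3 : S = 0 := by
      rw [← trace_conjTranspose_mul_self_eq_zero_iff]
      have h4 : 0 ≤ (Sᴴ * S).trace := (posSemidef_conjTranspose_mul_self S).trace_nonneg
      refine le_antisymm ?_ h4
      have h5 := Complex.le_def.1 h4
      rw [Complex.le_def]
      refine ⟨?_, h5.2.symm⟩
      rw [hS.eq]
      simp [mul_sub, trace_sub, ← h0] at h2
      simpa using h2
    exact ⟨0, Fin.elim0, Fin.elim0, fun i => i.elim0, fun i => i.elim0, by simp [h3]⟩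
  · set t := S.trace.re with ht
    have hsep : ∀ T ∈ convexHull ℝ (pureK dA dB), SepPos T := by
      refine convexHull_min (t := {T | SepPos T}) ?_ ?_
      · rintro _ ⟨p, -, rfl⟩
        exact sepPos_pureP _ _
      · intro x hx y hy a b ha hb _
        exact (SepPos.smul_aux hx ha).add_aux (SepPos.smul_aux hy hb)
    by_cases hmem : t⁻¹ • S ∈ convexHull ℝ (pureK dA dB)
    · have := (hsep _ hmem).smul_aux hpos.le
      rwa [smul_smul, mul_inv_cancel₀ hpos.ne', one_smul] at this
    · exfalso
      obtain ⟨f, u, hf1, hf2⟩ := cone_sep_aux (isCompact_pureK dA dB) hmem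
      obtain ⟨X, hX, hfX⟩ := functional_rep_aux f.toLinearMap
      have h2 := h (X - u • (1 : Matrix _ _ ℂ))
        (hX.sub (isHermitian_one.smul (IsSelfAdjoint.all u))) (fun k hk => by
          have h3 := hf2 k hk
          have hk' : k.IsHermitian := by
            obtain ⟨p, -, rfl⟩ := hk
            exact pureP_herm _ _
          have h4 := hfX k hk'
          rw [trace_mul_comm] at h4
          simp only [sub_mul, smul_mul_assoc, one_mul, trace_sub, trace_smul, trace_pureK hk]
          simp at h4 ⊢
          linarith)
      have h4 := hfX S hS
      simp only [mul_sub, mul_smul_comm, mul_one, trace_sub, trace_smul] at h2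
      rw [map_smul] at hf1
      simp [← ht] at h2 h4 hf1
      rw [← h4] at h2
      rw [inv_mul_lt_iff₀ hpos] at hf1
      linarith

/-- under the Hilbert–Schmidt pairing, the separable positive operators
and the POPT operators are dual cones of each other (restricted to self-adjoint
operators). -/
theorem sepPos_popt_duality (dA dB : ℕ) (hdA : 1 ≤ dA) (hdB : 1 ≤ dB) :
    (∀ S : Matrix (Fin dA × Fin dB) (Fin dA × Fin dB) ℂ, S.IsHermitian →
      (SepPos S ↔ ∀ X : Matrix (Fin dA × Fin dB) (Fin dA × Fin dB) ℂ,
        X.IsHermitian → POPT X → 0 ≤ ((S * X).trace).re)) ∧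
    (∀ X : Matrix (Fin dA × Fin dB) (Fin dA × Fin dB) ℂ, X.IsHermitian →
      (POPT X ↔ ∀ S : Matrix (Fin dA × Fin dB) (Fin dA × Fin dB) ℂ,
        SepPos S → 0 ≤ ((X * S).trace).re)) := by
  refine ⟨fun S hS => ⟨fun hsep X hX hp => ?_, fun h => ?_⟩, fun X hX => ⟨fun hp S hS => ?_, fun h => ?_⟩⟩
  · rw [trace_mul_comm]
    exact sepPos_pairing ((popt_iff_aux X hX).1 hp) hsep
  · exact sepPos_of_dual hS fun X hX hk => h X hX ((popt_iff_aux X hX).2 (pureK_pos hk))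
  · exact sepPos_pairing ((popt_iff_aux X hX).1 hp) hS
  · exact (popt_iff_aux X hX).2 fun ψ φ => h _ (sepPos_pureP ψ φ)
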